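/- Let I = {p_{s,t}(x) : s,t ∈ [k], s ≥ t} be a set of k(k+1)/2 distinct monic irreducible polynomials over F_q with maximal degree Δ, let f_i(x) = ∏_{(s,t): s≥t, s≠i, t≠i} p_{s,t}(x) for i ∈ [k], let n > 2Δ·k(k−1)/2, and let γ ∈ F_{q^n} lie in no proper subfield. Then the set of polynomials {f_i(x)·f_j(x) : i,j ∈ [k], i ≥ j} is linearly independent over F_q, and V = span_{F_q}{f_1(γ),…,f_k(γ)} is a max-span Sidon space of dimension k. -/

import Mathlib

open Polynomial

/-- A subspace `V` of a field extension `K / F` is a *Sidon space* if for all nonzero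
`a, b, c, d ∈ V`, `a * b = c * d` implies `{aF, bF} = {cF, dF}`. -/
def IsSidon {F K : Type*} [Field F] [Field K] [Algebra F K] (V : Submodule F K) : Prop :=
  ∀ a ∈ V, ∀ b ∈ V, ∀ c ∈ V, ∀ d ∈ V,
    a ≠ 0 → b ≠ 0 → c ≠ 0 → d ≠ 0 → a * b = c * d →
    ({Submodule.span F {a}, Submodule.span F {b}} : Set (Submodule F K)) =
      {Submodule.span F {c}, Submodule.span F {d}}

abbrev LowTri (k : ℕ) := {st : Fin k × Fin k // st.2 ≤ st.1}

theorem card_lowTri (k : ℕ) : Fintype.card (LowTri k) = k * (k + 1) / 2 := by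
  have e : Fintype.card (LowTri k) = ∑ s : Fin k, (s.val + 1) := by
    rw [Fintype.card_subtype, Finset.card_filter, Fintype.sum_prod_type]
    refine Finset.sum_congr rfl fun s _ => ?_
    rw [← Finset.card_filter]
    have : (Finset.univ.filter fun t : Fin k => t ≤ s) = Finset.Iic s := by
      ext; simp
    simp only [this, Fin.card_Iic]
  rw [e, Fin.sum_univ_eq_sum_range (fun i => i + 1) k]
  have h := Finset.sum_range_id_mul_two (k + 1)
  rw [Finset.sum_range_succ'] at h
  simp only [Nat.add_sub_cancel, add_zero] at h
  have h2 : (k + 1) * k = k * (k + 1) := Nat.mul_comm _ _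
  omega

theorem card_avoid (k : ℕ) (i : Fin k) :
    (Finset.univ.filter (fun st : Fin k × Fin k =>
      st.2 ≤ st.1 ∧ st.1 ≠ i ∧ st.2 ≠ i)).card = k * (k - 1) / 2 := by
  have hT := card_lowTri k
  rw [Fintype.card_subtype] at hT
  have hsplit := Finset.card_filter_add_card_filter_not
    (s := Finset.univ.filter fun st : Fin k × Fin k => st.2 ≤ st.1)
    (fun st : Fin k × Fin k => st.1 ≠ i ∧ st.2 ≠ i)
  rw [Finset.filter_filter, Finset.filter_filter, hT] at hsplit
  have hc : (Finset.univ.filter (fun st : Fin k × Fin k =>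
      st.2 ≤ st.1 ∧ ¬ (st.1 ≠ i ∧ st.2 ≠ i))).card = k := by
    have : (Finset.univ.filter (fun st : Fin k × Fin k =>
        st.2 ≤ st.1 ∧ ¬ (st.1 ≠ i ∧ st.2 ≠ i))) =
        Finset.univ.image (fun j : Fin k => (max i j, min i j)) := by
      ext ⟨s, t⟩
      simp only [Finset.mem_filter, Finset.mem_univ, true_and, Finset.mem_image, Prod.mk.injEq]
      constructor
      · rintro ⟨h1, h2⟩
        by_cases hs : s = i
        · subst hs
          exact ⟨t, by simp [h1], by simp [h1]⟩
        · have : t = i := by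
            by_contra h
            exact h2 ⟨hs, h⟩
          subst this
          exact ⟨s, by simp [h1], by simp [h1]⟩
      · rintro ⟨j, rfl, rfl⟩
        refine ⟨min_le_max, ?_⟩
        rcases le_total i j with h | h <;> simp [h]
    rw [this, Finset.card_image_of_injective, Finset.card_univ, Fintype.card_fin]
    intro a b hab
    simp only [Prod.mk.injEq] at hab
    obtain ⟨h1, h2⟩ := hab
    rcases le_total i a with h | h <;> rcases le_total i b with h' | h' <;>
      simp only [max_eq_left, max_eq_right, min_eq_left, min_eq_right, h, h'] at h1 h2 <;>
      omega
  rw [hc] at hsplit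
  have hk : 1 ≤ k := by have := i.isLt; omega
  obtain ⟨m, rfl⟩ : ∃ m, k = m + 1 := ⟨k - 1, by omega⟩
  simp only [Nat.add_sub_cancel]
  have : (m + 1) * (m + 1 + 1) = (m + 1) * m + 2 * (m + 1) := by ring
  omega

/-- Fold a square sum into a triangular one. -/
theorem fold_sum {F R : Type*} [Field F] [CommRing R] [Algebra F R] {k : ℕ}
    (M : Fin k → Fin k → F) (x : Fin k → R) :
    ∑ i, ∑ j, M i j • (x i * x j) =
      ∑ st : LowTri k, (if st.1.1 = st.1.2 then M st.1.1 st.1.1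
        else M st.1.1 st.1.2 + M st.1.2 st.1.1) • (x st.1.1 * x st.1.2) := by
  rw [← Fintype.sum_prod_type' (fun i j => M i j • (x i * x j))]
  have h1 : ∑ st : LowTri k, (if st.1.1 = st.1.2 then M st.1.1 st.1.1
        else M st.1.1 st.1.2 + M st.1.2 st.1.1) • (x st.1.1 * x st.1.2) =
      ∑ st ∈ Finset.univ.filter (fun st : Fin k × Fin k => st.2 ≤ st.1),
        (if st.1 = st.2 then M st.1 st.1
        else M st.1 st.2 + M st.2 st.1) • (x st.1 * x st.2) := by
    symm
    apply Finset.sum_subtype (Finset.univ.filter (fun st : Fin k × Fin k => st.2 ≤ st.1))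
      (p := fun st : Fin k × Fin k => st.2 ≤ st.1)
      (f := fun st => (if st.1 = st.2 then M st.1 st.1
        else M st.1 st.2 + M st.2 st.1) • (x st.1 * x st.2))
    simp
  rw [h1, Finset.sum_filter]
  have key : ∀ st : Fin k × Fin k,
      (if st.2 ≤ st.1 then (if st.1 = st.2 then M st.1 st.1
        else M st.1 st.2 + M st.2 st.1) • (x st.1 * x st.2) else 0) =
      (if st.2 ≤ st.1 then M st.1 st.2 • (x st.1 * x st.2) else 0) +
      (if st.2 < st.1 then M st.2 st.1 • (x st.2 * x st.1) else 0) := by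
    rintro ⟨s, t⟩
    rcases lt_trichotomy s t with h | h | h
    · simp [h.not_ge, h.not_gt]
    · subst h; simp
    · simp [h, h.le, h.ne', add_smul, mul_comm]
  rw [Finset.sum_congr rfl fun st _ => key st, Finset.sum_add_distrib]
  have sw : ∑ st : Fin k × Fin k, (if st.2 < st.1 then M st.2 st.1 • (x st.2 * x st.1) else 0) =
      ∑ st : Fin k × Fin k, (if st.1 < st.2 then M st.1 st.2 • (x st.1 * x st.2) else 0) :=
    Fintype.sum_equiv (Equiv.prodComm _ _) _ _ fun st => rfl
  rw [sw, ← Finset.sum_add_distrib]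
  refine Finset.sum_congr rfl fun st _ => ?_
  rcases le_or_gt st.2 st.1 with h | h
  · simp [h, h.not_gt]
  · simp [h, h.not_ge]

theorem mul_expand {F R : Type*} [Field F] [CommRing R] [Algebra F R] {k : ℕ}
    (a b : Fin k → F) (x : Fin k → R) :
    (∑ i, a i • x i) * (∑ i, b i • x i) = ∑ i, ∑ j, (a i * b j) • (x i * x j) := by
  rw [Finset.sum_mul_sum]
  simp only [smul_mul_smul_comm]

/-- Transfer of a quadratic identity to any algebra. -/
theorem transfer {F K R : Type*} [Field F] [Field K] [Algebra F K] [CommRing R] [Algebra F R]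
    {k : ℕ} (v : Fin k → K)
    (hv : LinearIndependent F (fun st : LowTri k => v st.1.1 * v st.1.2))
    (a b c d : Fin k → F)
    (h : (∑ i, a i • v i) * (∑ i, b i • v i) = (∑ i, c i • v i) * (∑ i, d i • v i))
    (x : Fin k → R) :
    (∑ i, a i • x i) * (∑ i, b i • x i) = (∑ i, c i • x i) * (∑ i, d i • x i) := by
  have e : ∀ {S : Type _} [CommRing S] [Algebra F S] (y : Fin k → S),
      (∑ i, a i • y i) * (∑ i, b i • y i) - (∑ i, c i • y i) * (∑ i, d i • y i) =
      ∑ i, ∑ j, (a i * b j - c i * d j) • (y i * y j) := by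
    intro S _ _ y
    simp only [mul_expand, sub_smul, Finset.sum_sub_distrib]
  have e' : (∑ i, a i • v i) * (∑ i, b i • v i) - (∑ i, c i • v i) * (∑ i, d i • v i) =
      ∑ i, ∑ j, (a i * b j - c i * d j) • (v i * v j) := by
    simp only [mul_expand, sub_smul, Finset.sum_sub_distrib]
  rw [sub_eq_zero.mpr h, fold_sum (fun i j => a i * b j - c i * d j)] at e'
  have hz := Fintype.linearIndependent_iff.mp hv _ e'.symm
  rw [← sub_eq_zero, e, fold_sum (fun i j => a i * b j - c i * d j)]
  refine Finset.sum_eq_zero fun st _ => ?_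
  rw [hz st, zero_smul]

theorem prop_of {F K : Type*} [Field F] [Field K] [Algebra F K]
    {k : ℕ} (v : Fin k → K)
    (hv : LinearIndependent F (fun st : LowTri k => v st.1.1 * v st.1.2))
    (a b c d : Fin k → F)
    (h : (∑ i, a i • v i) * (∑ i, b i • v i) = (∑ i, c i • v i) * (∑ i, d i • v i))
    (i₀ : Fin k) (hi : a i₀ ≠ 0) :
    (∀ j, a i₀ * c j = c i₀ * a j) ∨ (∀ j, a i₀ * d j = d i₀ * a j) := by
  let L : (Fin k → F) → F[X] := fun u => ∑ j, u j • (X : F[X]) ^ (j : ℕ)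
  let x : Fin k → F[X] := fun j => a i₀ • (X : F[X]) ^ (j : ℕ) - if j = i₀ then L a else 0
  have ev : ∀ u : Fin k → F, ∑ j, u j • x j = a i₀ • L u - u i₀ • L a := by
    intro u
    simp only [x, smul_sub, Finset.sum_sub_distrib, smul_ite, smul_zero,
      Finset.sum_ite_eq', Finset.mem_univ, if_true, L, Finset.smul_sum]
    simp only [Finset.sum_ite_eq', Finset.mem_univ, if_true, smul_comm (a i₀)]
  have cf : ∀ (u : Fin k → F) (j : Fin k), (L u).coeff j = u j := by
    intro u j
    simp only [L, finset_sum_coeff, coeff_smul, coeff_X_pow, smul_eq_mul, mul_ite, mul_one,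
      mul_zero, Fin.val_inj, Finset.sum_ite_eq, Finset.mem_univ, if_true]
  have t := transfer v hv a b c d h x
  rw [ev a, sub_self, zero_mul] at t
  rcases mul_eq_zero.mp t.symm with h0 | h0
  · left
    intro j
    rw [ev] at h0
    have := congrArg (fun p => p.coeff (j : ℕ)) h0
    simp only [coeff_sub, coeff_smul, cf, smul_eq_mul, coeff_zero] at this
    exact sub_eq_zero.mp this
  · right
    intro j
    rw [ev] at h0
    have := congrArg (fun p => p.coeff (j : ℕ)) h0
    simp only [coeff_sub, coeff_smul, cf, smul_eq_mul, coeff_zero] at this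
    exact sub_eq_zero.mp this

theorem pair_span {F K : Type*} [Field F] [Field K] [Algebra F K] (a b c d : K) (l : F)
    (ha : a ≠ 0) (hc : c ≠ 0) (h : a * b = c * d) (hl : c = l • a) :
    Submodule.span F {a} = Submodule.span F {c} ∧
    Submodule.span F {b} = Submodule.span F {d} := by
  have l0 : l ≠ 0 := by
    rintro rfl
    exact hc (by simpa using hl)
  have hb : b = l • d := by
    apply mul_left_cancel₀ ha
    rw [h, hl, smul_mul_assoc, mul_smul_comm]
  constructor
  · rw [hl, Submodule.span_singleton_smul_eq (IsUnit.mk0 l l0)]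
  · rw [hb, Submodule.span_singleton_smul_eq (IsUnit.mk0 l l0)]

theorem sidon_of {F K : Type*} [Field F] [Field K] [Algebra F K]
    {k : ℕ} (v : Fin k → K)
    (hv : LinearIndependent F (fun st : LowTri k => v st.1.1 * v st.1.2)) :
    IsSidon (Submodule.span F (Set.range v)) := by
  intro a ha b hb c hc d hd a0 b0 c0 d0 h
  obtain ⟨a', rfl⟩ := (Submodule.mem_span_range_iff_exists_fun F).mp ha
  obtain ⟨b', rfl⟩ := (Submodule.mem_span_range_iff_exists_fun F).mp hb
  obtain ⟨c', rfl⟩ := (Submodule.mem_span_range_iff_exists_fun F).mp hc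
  obtain ⟨d', rfl⟩ := (Submodule.mem_span_range_iff_exists_fun F).mp hd
  obtain ⟨i₀, hi⟩ : ∃ i, a' i ≠ 0 := by
    by_contra! hh
    exact a0 (by simp [hh])
  have lin : ∀ u : Fin k → F, (∀ j, a' i₀ * u j = u i₀ * a' j) →
      ∑ i, u i • v i = (u i₀ / a' i₀) • ∑ i, a' i • v i := by
    intro u hu
    rw [Finset.smul_sum]
    refine Finset.sum_congr rfl fun j _ => ?_
    rw [smul_smul]
    congr 1
    field_simp
    linear_combination hu j
  rcases prop_of v hv a' b' c' d' h i₀ hi with h1 | h1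
  · obtain ⟨e1, e2⟩ := pair_span _ _ _ _ _ a0 c0 h (lin c' h1)
    rw [e1, e2]
  · obtain ⟨e1, e2⟩ := pair_span _ _ _ _ _ a0 d0 (h.trans (mul_comm _ _)) (lin d' h1)
    rw [e1, e2, Set.pair_comm]

theorem poly_indep {F : Type*} [Field F] {k : ℕ}
    (P : Fin k → Fin k → Polynomial F)
    (hmonic : ∀ s t : Fin k, t ≤ s → (P s t).Monic)
    (hirr : ∀ s t : Fin k, t ≤ s → Irreducible (P s t))
    (hdist : ∀ s t s' t' : Fin k, t ≤ s → t' ≤ s' → (s, t) ≠ (s', t') → P s t ≠ P s' t')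
    (f : Fin k → Polynomial F)
    (hf : ∀ i : Fin k, f i =
      ∏ st ∈ Finset.univ.filter
        (fun st : Fin k × Fin k => st.2 ≤ st.1 ∧ st.1 ≠ i ∧ st.2 ≠ i), P st.1 st.2) :
    LinearIndependent F
      (fun st : LowTri k => f st.1.1 * f st.1.2) := by
  have dv : ∀ s t i : Fin k, t ≤ s → s ≠ i → t ≠ i → P s t ∣ f i := by
    intro s t i h h1 h2
    rw [hf]
    exact Finset.dvd_prod_of_mem (fun st : Fin k × Fin k => P st.1 st.2)
      (a := (s, t)) (by simp [h, h1, h2])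
  have ndv : ∀ s t i : Fin k, t ≤ s → (s = i ∨ t = i) → ¬ P s t ∣ f i := by
    intro s t i h h1 h2
    rw [hf, (hirr s t h).prime.dvd_finsetProd_iff] at h2
    obtain ⟨⟨s', t'⟩, hm, hd⟩ := h2
    simp only [Finset.mem_filter, Finset.mem_univ, true_and] at hm
    obtain ⟨m1, m2, m3⟩ := hm
    have hne : (s, t) ≠ (s', t') := by
      intro he
      simp only [Prod.mk.injEq] at he
      obtain ⟨rfl, rfl⟩ := he
      tauto
    exact hdist s t s' t' h m1 hne (eq_of_monic_of_associated (hmonic _ _ h) (hmonic _ _ m1)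
      ((hirr s t h).associated_of_dvd (hirr s' t' m1) hd))
  rw [Fintype.linearIndependent_iff]
  intro g hg
  -- isolating step
  have iso : ∀ st : LowTri k,
      (∀ uv : LowTri k, uv ≠ st → g uv = 0 ∨ P st.1.1 st.1.2 ∣ f uv.1.1 * f uv.1.2) →
      g st = 0 := by
    intro st hst
    by_contra hne
    have hdv : P st.1.1 st.1.2 ∣ g st • (f st.1.1 * f st.1.2) := by
      rw [← Finset.add_sum_erase _ _ (Finset.mem_univ st)] at hg
      rw [eq_neg_of_add_eq_zero_left hg, dvd_neg]
      refine Finset.dvd_sum fun uv huv => ?_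
      rcases hst uv (Finset.ne_of_mem_erase huv) with h | h
      · rw [h, zero_smul]; exact dvd_zero _
      · exact dvd_smul_of_dvd _ h
    have hdv' : P st.1.1 st.1.2 ∣ f st.1.1 * f st.1.2 := by
      have := dvd_smul_of_dvd (g st)⁻¹ hdv
      rwa [smul_smul, inv_mul_cancel₀ hne, one_smul] at this
    rcases (hirr _ _ st.2).prime.dvd_or_dvd hdv' with h | h
    · exact ndv _ _ _ st.2 (Or.inl rfl) h
    · exact ndv _ _ _ st.2 (Or.inr rfl) h
  have diag : ∀ st : LowTri k, st.1.1 = st.1.2 → g st = 0 := by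
    rintro ⟨⟨s, t⟩, hle⟩ hst
    simp only at hst
    subst hst
    refine iso _ ?_
    rintro ⟨⟨u, w⟩, huw⟩ hne
    right
    by_cases h : s = u
    · have h2 : s ≠ w := by
        rintro rfl
        subst h
        exact hne rfl
      exact Dvd.dvd.mul_left (dv _ _ _ hle h2 h2) _
    · exact Dvd.dvd.mul_right (dv _ _ _ hle h h) _
  intro st
  refine iso st ?_
  intro uv hne
  by_cases hd : uv.1.1 = uv.1.2
  · exact Or.inl (diag uv hd)
  right
  obtain ⟨⟨s, t⟩, hle⟩ := st
  obtain ⟨⟨u, w⟩, huw⟩ := uv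
  simp only at hle huw hd ⊢
  by_cases h1 : s = u ∨ t = u
  · by_cases h2 : s = w ∨ t = w
    · exfalso
      apply hne
      have : u = s ∧ w = t := by
        rcases h1 with rfl | rfl <;> rcases h2 with rfl | rfl
        · exact absurd rfl hd
        · exact ⟨rfl, rfl⟩
        · exact absurd (le_antisymm hle huw) hd
        · exact absurd rfl hd
      obtain ⟨rfl, rfl⟩ := this
      rfl
    · push Not at h2
      exact Dvd.dvd.mul_left (dv _ _ _ hle h2.1 h2.2) _
  · push Not at h1
    exact Dvd.dvd.mul_right (dv _ _ _ hle h1.1 h1.2) _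

theorem stmt11 {F K : Type*} [Field F] [Fintype F] [Field K] [Fintype K] [Algebra F K]
    (q n k Δ : ℕ) (hq : q = Fintype.card F) (hcard : Fintype.card K = q ^ n)
    (hk : 1 ≤ k)
    (P : Fin k → Fin k → Polynomial F)
    (hmonic : ∀ s t : Fin k, t ≤ s → (P s t).Monic)
    (hirr : ∀ s t : Fin k, t ≤ s → Irreducible (P s t))
    (hdist : ∀ s t s' t' : Fin k, t ≤ s → t' ≤ s' → (s, t) ≠ (s', t') → P s t ≠ P s' t')
    (hΔ : ∀ s t : Fin k, t ≤ s → (P s t).natDegree ≤ Δ)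
    (f : Fin k → Polynomial F)
    (hf : ∀ i : Fin k, f i =
      ∏ st ∈ Finset.univ.filter
        (fun st : Fin k × Fin k => st.2 ≤ st.1 ∧ st.1 ≠ i ∧ st.2 ≠ i), P st.1 st.2)
    (hn : 2 * Δ * (k * (k - 1) / 2) < n)
    (γ : K) (hγ : ∀ E : Subfield K, γ ∈ E → E = ⊤) :
    LinearIndependent F
      (fun st : {st : Fin k × Fin k // st.2 ≤ st.1} => f st.1.1 * f st.1.2) ∧
    Module.finrank F
      ↥(Submodule.span F (Set.range fun i => Polynomial.aeval γ (f i))) = k ∧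
    IsSidon (Submodule.span F (Set.range fun i => Polynomial.aeval γ (f i))) ∧
    Module.finrank F
      ↥(Submodule.span F (Set.range fun i => Polynomial.aeval γ (f i)) *
        Submodule.span F (Set.range fun i => Polynomial.aeval γ (f i))) =
      k * (k + 1) / 2 := by
  have hpoly := poly_indep P hmonic hirr hdist f hf
  have hfin : Module.finrank F K = n := by
    have h1 := Module.card_eq_pow_finrank (K := F) (V := K)
    rw [hcard, hq] at h1
    exact (Nat.pow_right_injective Fintype.one_lt_card h1).symm
  have hadj : IntermediateField.adjoin F {γ} = ⊤ := by
    have := hγ (IntermediateField.adjoin F {γ}).toSubfield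
      (IntermediateField.mem_adjoin_simple_self F γ)
    rw [← IntermediateField.toSubfield_inj, this]
    rfl
  have hint : IsIntegral F γ := IsIntegral.of_finite F γ
  have hmin : (minpoly F γ).natDegree = n := by
    rw [← IntermediateField.adjoin.finrank hint, hadj, IntermediateField.finrank_top', hfin]
  have hdeg : ∀ i, (f i).natDegree ≤ k * (k - 1) / 2 * Δ := by
    intro i
    rw [hf i]
    refine (natDegree_prod_le _ _).trans ?_
    refine (Finset.sum_le_card_nsmul _ _ Δ ?_).trans ?_
    · intro st hst
      exact hΔ _ _ (Finset.mem_filter.mp hst).2.1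
    · rw [card_avoid, smul_eq_mul]
  have hv : LinearIndependent F (fun st : LowTri k =>
      Polynomial.aeval γ (f st.1.1) * Polynomial.aeval γ (f st.1.2)) := by
    rw [Fintype.linearIndependent_iff] at hpoly ⊢
    intro g hg
    apply hpoly g
    have hz : Polynomial.aeval γ (∑ st : LowTri k, g st • (f st.1.1 * f st.1.2)) = 0 := by
      rw [← hg]
      simp only [map_sum, map_smul, map_mul]
    by_contra hne
    have h1 := natDegree_le_of_dvd (minpoly.dvd F γ hz) hne
    have h2 : (∑ st : LowTri k, g st • (f st.1.1 * f st.1.2)).natDegree ≤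
        2 * Δ * (k * (k - 1) / 2) := by
      refine natDegree_sum_le_of_forall_le _ _ fun st _ => ?_
      refine (natDegree_smul_le _ _).trans (natDegree_mul_le.trans ?_)
      have := hdeg st.1.1
      have := hdeg st.1.2
      have e : 2 * Δ * (k * (k - 1) / 2) = k * (k - 1) / 2 * Δ + k * (k - 1) / 2 * Δ := by ring
      omega
    omega
  refine ⟨hpoly, ?_, sidon_of _ hv, ?_⟩
  · have hli : LinearIndependent F (fun i => Polynomial.aeval γ (f i)) := by
      let z : Fin k := ⟨0, hk⟩
      have h1 := hv.comp (fun i : Fin k => (⟨(i, z), Nat.zero_le _⟩ : LowTri k))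
        (fun a b hab => by simpa using hab)
      exact LinearIndependent.of_comp (LinearMap.mulRight F (Polynomial.aeval γ (f z))) h1
    rw [finrank_span_eq_card hli, Fintype.card_fin]
  · rw [Submodule.span_mul_span]
    open Pointwise in
    have hs : (Set.range fun i => Polynomial.aeval γ (f i)) *
        (Set.range fun i => Polynomial.aeval γ (f i)) =
        Set.range (fun st : LowTri k =>
          Polynomial.aeval γ (f st.1.1) * Polynomial.aeval γ (f st.1.2)) := by
      ext y
      simp only [Set.mem_mul, Set.mem_range]
      constructor
      · rintro ⟨_, ⟨i, rfl⟩, _, ⟨j, rfl⟩, rfl⟩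
        rcases le_total j i with h | h
        · exact ⟨⟨(i, j), h⟩, rfl⟩
        · exact ⟨⟨(j, i), h⟩, mul_comm _ _⟩
      · rintro ⟨st, rfl⟩
        exact ⟨_, ⟨st.1.1, rfl⟩, _, ⟨st.1.2, rfl⟩, rfl⟩
    rw [hs, finrank_span_eq_card hv, card_lowTri]
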